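/- Fix δ ∈ (0,1/3] and let μ be the Borel measure on ℝ determined by μ([j + i·3^{−n}, j + (i+1)·3^{−n})) = δ^{n−k(i)}(1−2δ)^{k(i)} for all integers j, n ≥ 0 and 0 ≤ i < 3^n, where k(i) is the number of digits equal to 1 among the first n ternary digits of i. Then μ is a doubling measure on ℝ: there exists a constant C(δ) < ∞ such that μ(B(x,2r)) ≤ C(δ)·μ(B(x,r)) for all x ∈ ℝ and r > 0. -/

import Mathlib

open MeasureTheory Set

noncomputable section

/-- The number of ternary (base-3) digits of `i` equal to `1`. -/
def ternaryOnes (i : ℕ) : ℕ := (Nat.digits 3 i).count 1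

/-- The triadic mass assignment determining the measure `μ`. -/
def ternarySpec (δ : ℝ) (μ : Measure ℝ) : Prop :=
  ∀ (j : ℤ) (n i : ℕ), i < 3 ^ n →
    μ (Set.Ico ((j : ℝ) + (i : ℝ) / 3 ^ n) ((j : ℝ) + ((i : ℝ) + 1) / 3 ^ n)) =
      ENNReal.ofReal (δ ^ (n - ternaryOnes i) * (1 - 2 * δ) ^ ternaryOnes i)

/-!
A measure on `ℝ` is doubling as soon as, at every scale `b ^ e` with `e : ℤ`, adjacent cells of the
grid of mesh `b ^ e` have comparable masses: `B(x, r)` contains the cell of `x` at the largest scale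
`b ^ e ≤ r`, while `B(x, 2r)` is covered by a bounded number of cells near it.

For the ternary measure, at scales `3 ^ n ≥ 1` all cells have the same mass. At scale `3 ^ (-n)`,
adjacent indices either share their parent and differ in the last digit only, or they have adjacent
parents and last digits `2` and `0`. These two digits carry the same factor `δ`, so the ratio of the
masses is inherited from the parents, and no error accumulates along the generations.
-/

open scoped ENNReal NNReal

section NeighborComparable

/-- Consecutive values of `f` agree up to the factor `K`. Applied to the masses of the cells of a
grid, it expresses that adjacent cells have comparable masses. -/
def NeighborComparable {α : Type*} [Mul α] [LE α] (K : α) (f : ℤ → α) : Prop :=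
  ∀ m, f m ≤ K * f (m + 1) ∧ f (m + 1) ≤ K * f m

lemma NeighborComparable.apply_add_le {α : Type*} [Monoid α] [Preorder α] [MulLeftMono α]
    {K : α} {f : ℤ → α} (hf : NeighborComparable K f) (m k : ℤ) :
    f (m + k) ≤ K ^ k.natAbs * f m := by
  obtain ⟨n, rfl | rfl⟩ := k.eq_nat_or_neg
  · rw [Int.natAbs_natCast]
    induction n with
    | zero => simp
    | succ n ih =>
      calc f (m + (n + 1 : ℕ)) = f (m + n + 1) := by push_cast; rw [add_assoc]
        _ ≤ K * f (m + n) := (hf _).2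
        _ ≤ K * (K ^ n * f m) := mul_le_mul_right ih K
        _ = K ^ (n + 1) * f m := by rw [pow_succ', mul_assoc]
  · rw [Int.natAbs_neg, Int.natAbs_natCast]
    induction n with
    | zero => simp
    | succ n ih =>
      calc f (m + -(n + 1 : ℕ)) ≤ K * f (m + -(n + 1 : ℕ) + 1) := (hf _).1
        _ = K * f (m + -n) := by congr 2; push_cast; ring
        _ ≤ K * (K ^ n * f m) := mul_le_mul_right ih K
        _ = K ^ (n + 1) * f m := by rw [pow_succ', mul_assoc]

end NeighborComparable

section GridCell

/-- The `m`-th cell of the grid of mesh `h` on the real line. Cells are half-open, so that for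
`0 < h` they partition the line. -/
def gridCell (h : ℝ) (m : ℤ) : Set ℝ := Ico (m * h) ((m + 1) * h)

variable {h x r R : ℝ} {m : ℤ} {μ : Measure ℝ} {K : ℝ≥0∞}

lemma exists_mem_gridCell (hh : 0 < h) (x : ℝ) : ∃ m : ℤ, x ∈ gridCell h m :=
  ⟨⌊x / h⌋, (le_div_iff₀ hh).1 (Int.floor_le _), (div_lt_iff₀ hh).1 (Int.lt_floor_add_one _)⟩

lemma gridCell_subset_ball (hx : x ∈ gridCell h m) (hr : h ≤ r) :
    gridCell h m ⊆ Metric.ball x r := by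
  rintro y ⟨hy₁, hy₂⟩
  obtain ⟨hx₁, hx₂⟩ := hx
  rw [Real.ball_eq_Ioo]
  constructor <;> linarith

lemma ball_subset_biUnion_gridCell {N : ℕ} (hh : 0 < h) (hx : x ∈ gridCell h m)
    (hR : R ≤ N * h) :
    Metric.ball x R ⊆ ⋃ k ∈ Finset.Icc (-N : ℤ) N, gridCell h (m + k) := by
  intro y hy
  obtain ⟨l, hl⟩ := exists_mem_gridCell hh y
  obtain ⟨hx₁, hx₂⟩ := hx
  rw [Real.ball_eq_Ioo] at hy
  have hlower : (m - N : ℝ) < l + 1 := lt_of_mul_lt_mul_right (by linarith [hy.1, hl.2]) hh.le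
  have hupper : (l : ℝ) < m + 1 + N := lt_of_mul_lt_mul_right (by linarith [hy.2, hl.1]) hh.le
  norm_cast at hlower hupper
  refine mem_biUnion (x := l - m) (Finset.mem_Icc.2 ⟨by omega, by omega⟩) ?_
  rwa [add_sub_cancel]

lemma measure_ball_le_of_neighborComparable {N : ℕ} (hh : 0 < h)
    (hμ : NeighborComparable K fun m ↦ μ (gridCell h m)) (hr : h ≤ r) (hR : R ≤ N * h) :
    μ (Metric.ball x R) ≤
      (∑ k ∈ Finset.Icc (-N : ℤ) N, K ^ k.natAbs) * μ (Metric.ball x r) := by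
  obtain ⟨m, hx⟩ := exists_mem_gridCell hh x
  calc μ (Metric.ball x R)
      ≤ μ (⋃ k ∈ Finset.Icc (-N : ℤ) N, gridCell h (m + k)) :=
        measure_mono (ball_subset_biUnion_gridCell hh hx hR)
    _ ≤ ∑ k ∈ Finset.Icc (-N : ℤ) N, μ (gridCell h (m + k)) := measure_biUnion_finset_le _ _
    _ ≤ ∑ k ∈ Finset.Icc (-N : ℤ) N, K ^ k.natAbs * μ (gridCell h m) :=
        Finset.sum_le_sum fun k _ ↦ hμ.apply_add_le m k
    _ = (∑ k ∈ Finset.Icc (-N : ℤ) N, K ^ k.natAbs) * μ (gridCell h m) :=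
        (Finset.sum_mul ..).symm
    _ ≤ (∑ k ∈ Finset.Icc (-N : ℤ) N, K ^ k.natAbs) * μ (Metric.ball x r) := by
        gcongr
        exact gridCell_subset_ball hx hr

theorem exists_measure_ball_two_mul_le_of_neighborComparable {b : ℕ} (hb : 1 < b) (hK : K ≠ ∞)
    (hμ : ∀ e : ℤ, NeighborComparable K fun m ↦ μ (gridCell ((b : ℝ) ^ e) m)) :
    ∃ C : ℝ≥0, ∀ (x : ℝ) (r : ℝ), 0 < r →
      μ (Metric.ball x (2 * r)) ≤ C * μ (Metric.ball x r) := by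
  lift K to ℝ≥0 using hK
  refine ⟨∑ k ∈ Finset.Icc (-(2 * b : ℕ) : ℤ) (2 * b : ℕ), K ^ k.natAbs, fun x r hr ↦ ?_⟩
  have hb₀ : (0 : ℝ) < b := by positivity
  obtain ⟨e, he, he'⟩ := exists_mem_Ico_zpow hr (Nat.one_lt_cast.2 hb)
  have hR : 2 * r ≤ (2 * b : ℕ) * (b : ℝ) ^ e := by
    rw [zpow_add_one₀ hb₀.ne'] at he'
    push_cast
    linarith
  push_cast [ENNReal.ofNNReal_finsetSum]
  exact_mod_cast measure_ball_le_of_neighborComparable (zpow_pos hb₀ e) (hμ e) he hR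

lemma measure_Ico_mul_of_measure_gridCell_eq {c : ℝ≥0∞} (hh : 0 ≤ h)
    (hμ : ∀ m, μ (gridCell h m) = c) (m : ℤ) (N : ℕ) :
    μ (Ico (m * h) ((m + N) * h)) = N * c := by
  induction N with
  | zero => simp
  | succ N ih =>
    have hsplit : Ico (m * h) ((m + (N + 1 : ℕ)) * h) =
        Ico (m * h) ((m + N) * h) ∪ gridCell h (m + N) := by
      simp only [gridCell, Int.cast_add, Int.cast_natCast, Nat.cast_succ, ← add_assoc]
      rw [Ico_union_Ico_eq_Ico] <;>
        exact mul_le_mul_of_nonneg_right (by linarith [N.cast_nonneg (α := ℝ)]) hh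
    have hdisj : Disjoint (Ico (m * h) ((m + N) * h)) (gridCell h (m + N)) := by
      simp only [gridCell, Int.cast_add, Int.cast_natCast]
      exact Ico_disjoint_Ico_same
    rw [hsplit, measure_union hdisj measurableSet_Ico, ih, hμ, Nat.cast_succ, add_one_mul]

lemma measure_gridCell_natCast_mul {c : ℝ≥0∞} (hh : 0 ≤ h) (hμ : ∀ m, μ (gridCell h m) = c)
    (N : ℕ) (m : ℤ) : μ (gridCell (N * h) m) = N * c := by
  rw [← measure_Ico_mul_of_measure_gridCell_eq hh hμ (m * N), gridCell]
  push_cast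
  congr 2 <;> ring

end GridCell

section TernaryWeight

variable {α : Type*} [CommMonoid α]

/-- The product of the factors `a`, `b`, `a` attached to the digits `0`, `1`, `2`, over the last `n`
ternary digits of `m`. For `a = δ` and `b = 1 - 2 * δ` it is the mass of the cell
`[m / 3 ^ n, (m + 1) / 3 ^ n)`; indexing by `ℤ` treats all unit intervals `[j, j + 1)` at once. -/
def ternaryWeight (a b : α) : ℕ → ℤ → α
  | 0, _ => 1
  | n + 1, m => ternaryWeight a b n (m / 3) * if m % 3 = 1 then b else a

theorem neighborComparable_ternaryWeight [Preorder α] [MulLeftMono α] {a b K : α} (hK : 1 ≤ K)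
    (hab : a ≤ K * b) (hba : b ≤ K * a) (n : ℕ) :
    NeighborComparable K (ternaryWeight a b n) := by
  induction n with
  | zero => simp [NeighborComparable, ternaryWeight, hK]
  | succ n ih =>
    intro m
    have hsibling {w c d : α} (h : c ≤ K * d) : w * c ≤ K * (w * d) :=
      (mul_le_mul_right h w).trans_eq (mul_left_comm ..)
    simp only [ternaryWeight]
    obtain h | h | h : m % 3 = 0 ∨ m % 3 = 1 ∨ m % 3 = 2 := by omega
    · rw [show (m + 1) / 3 = m / 3 by omega, if_neg (by omega), if_pos (by omega)]
      exact ⟨hsibling hab, hsibling hba⟩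
    · rw [show (m + 1) / 3 = m / 3 by omega, if_pos h, if_neg (by omega)]
      exact ⟨hsibling hba, hsibling hab⟩
    · rw [show (m + 1) / 3 = m / 3 + 1 by omega, if_neg (by omega), if_neg (by omega),
        ← mul_assoc, ← mul_assoc]
      exact ⟨mul_le_mul_left (ih _).1 a, mul_le_mul_left (ih _).2 a⟩

lemma ternaryOnes_eq_div_add (i : ℕ) :
    ternaryOnes i = ternaryOnes (i / 3) + if i % 3 = 1 then 1 else 0 := by
  obtain rfl | hi := i.eq_zero_or_pos
  · simp [ternaryOnes]
  · simp [ternaryOnes, Nat.digits_def' (by norm_num : 1 < 3) hi, List.count_cons]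

lemma ternaryOnes_le {n i : ℕ} (hi : i < 3 ^ n) : ternaryOnes i ≤ n :=
  List.count_le_length.trans ((Nat.digits_length_le_iff (by norm_num) i).2 hi)

lemma ternaryWeight_mul_pow_add (a b : α) (j : ℤ) {n i : ℕ} (hi : i < 3 ^ n) :
    ternaryWeight a b n (j * 3 ^ n + i) = a ^ (n - ternaryOnes i) * b ^ ternaryOnes i := by
  induction n generalizing i with
  | zero =>
    obtain rfl : i = 0 := by simpa using hi
    simp [ternaryWeight, ternaryOnes]
  | succ n ih =>
    have hi' : i / 3 < 3 ^ n := by rw [pow_succ] at hi; omega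
    have hshift : j * 3 ^ (n + 1) + (i : ℤ) = 3 * (j * 3 ^ n) + i := by ring
    have hparent : (j * 3 ^ (n + 1) + (i : ℤ)) / 3 = j * 3 ^ n + (i / 3 : ℕ) := by omega
    have hdigit : (j * 3 ^ (n + 1) + (i : ℤ)) % 3 = 1 ↔ i % 3 = 1 := by omega
    rw [ternaryWeight, hparent, ih hi', ternaryOnes_eq_div_add i]
    simp only [hdigit]
    split_ifs
    · rw [Nat.add_sub_add_right, pow_succ, mul_assoc]
    · rw [add_zero, Nat.sub_add_comm (ternaryOnes_le hi'), pow_succ, mul_right_comm]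

end TernaryWeight

namespace ternarySpec

variable {δ : ℝ} {μ : Measure ℝ}

theorem measure_gridCell_inv_pow (hμ : ternarySpec δ μ) (hδ₀ : 0 ≤ δ) (hδ : δ ≤ 1 / 2)
    (n : ℕ) (m : ℤ) :
    μ (gridCell ((3 ^ n)⁻¹) m) =
      ternaryWeight (ENNReal.ofReal δ) (ENNReal.ofReal (1 - 2 * δ)) n m := by
  obtain ⟨j, i, hi, rfl⟩ : ∃ (j : ℤ) (i : ℕ), i < 3 ^ n ∧ m = j * 3 ^ n + i := by
    have h3 : (0 : ℤ) < 3 ^ n := by positivity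
    have hnonneg := Int.emod_nonneg m h3.ne'
    refine ⟨m / 3 ^ n, (m % 3 ^ n).toNat, ?_, ?_⟩
    · zify
      rw [Int.toNat_of_nonneg hnonneg]
      exact Int.emod_lt_of_pos m h3
    · rw [Int.toNat_of_nonneg hnonneg, Int.ediv_mul_add_emod]
  have hcell : gridCell ((3 ^ n)⁻¹) (j * 3 ^ n + i) =
      Ico ((j : ℝ) + (i : ℝ) / 3 ^ n) ((j : ℝ) + ((i : ℝ) + 1) / 3 ^ n) := by
    rw [gridCell]
    push_cast
    congr 1 <;> field_simp
    ring
  rw [hcell, hμ j n i hi, ternaryWeight_mul_pow_add _ _ j hi, ENNReal.ofReal_mul (by positivity),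
    ENNReal.ofReal_pow hδ₀, ENNReal.ofReal_pow (by linarith)]

lemma measure_gridCell_pow (hμ : ternarySpec δ μ) (n : ℕ) (m : ℤ) :
    μ (gridCell (3 ^ n) m) = 3 ^ n := by
  have hunit (m : ℤ) : μ (gridCell 1 m) = 1 := by
    simpa [gridCell, ternaryOnes] using hμ m 0 0 one_pos
  simpa using measure_gridCell_natCast_mul zero_le_one hunit (3 ^ n) m

theorem neighborComparable_measure_gridCell (hμ : ternarySpec δ μ) (hδ₀ : 0 ≤ δ)
    (hδ : δ ≤ 1 / 2) {K : ℝ≥0∞} (hK : 1 ≤ K)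
    (hab : ENNReal.ofReal δ ≤ K * ENNReal.ofReal (1 - 2 * δ))
    (hba : ENNReal.ofReal (1 - 2 * δ) ≤ K * ENNReal.ofReal δ) (e : ℤ) :
    NeighborComparable K fun m ↦ μ (gridCell (3 ^ e) m) := by
  obtain ⟨n, rfl | rfl⟩ := e.eq_nat_or_neg
  · intro m
    simp only [zpow_natCast, hμ.measure_gridCell_pow]
    exact ⟨le_mul_of_one_le_left' hK, le_mul_of_one_le_left' hK⟩
  · simp only [zpow_neg, zpow_natCast, hμ.measure_gridCell_inv_pow hδ₀ hδ]
    exact neighborComparable_ternaryWeight hK hab hba n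

end ternarySpec

lemma exists_one_le_and_le_mul_and_le_mul {a b : ℝ≥0∞} (ha₀ : a ≠ 0) (ha : a ≠ ∞) (hb₀ : b ≠ 0)
    (hb : b ≠ ∞) : ∃ K ≠ ∞, 1 ≤ K ∧ a ≤ K * b ∧ b ≤ K * a := by
  refine ⟨1 + a / b + b / a, by finiteness, ?_, ?_, ?_⟩
  · exact le_self_add.trans le_self_add
  · calc a = a / b * b := (ENNReal.div_mul_cancel hb₀ hb).symm
      _ ≤ (1 + a / b + b / a) * b := by gcongr; exact le_add_self.trans le_self_add
  · calc b = b / a * a := (ENNReal.div_mul_cancel ha₀ ha).symm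
      _ ≤ (1 + a / b + b / a) * a := by gcongr; exact le_add_self

theorem ternary_measure_is_doubling_general (δ : ℝ) (hδ0 : 0 < δ) (hδ : δ < 1 / 2)
    (μ : Measure ℝ) (hμ : ternarySpec δ μ) :
    ∃ C : NNReal, ∀ (x : ℝ) (r : ℝ), 0 < r →
      μ (Metric.ball x (2 * r)) ≤ C * μ (Metric.ball x r) := by
  obtain ⟨K, hK, hK₁, hab, hba⟩ := exists_one_le_and_le_mul_and_le_mul
    (ENNReal.ofReal_pos.2 hδ0).ne' ENNReal.ofReal_ne_top
    (ENNReal.ofReal_pos.2 (by linarith : 0 < 1 - 2 * δ)).ne' ENNReal.ofReal_ne_top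
  refine exists_measure_ball_two_mul_le_of_neighborComparable (b := 3) (by norm_num) hK fun e ↦ ?_
  exact_mod_cast hμ.neighborComparable_measure_gridCell hδ0.le hδ.le hK₁ hab hba e

/-- The measure `μ` determined by the triadic mass assignment is doubling on `ℝ`: there is a
finite constant `C(δ)` with `μ(B(x,2r)) ≤ C(δ) · μ(B(x,r))` for all `x ∈ ℝ`, `r > 0`. -/
theorem ternary_measure_is_doubling (δ : ℝ) (hδ0 : 0 < δ) (hδ : δ ≤ 1 / 3)
    (μ : Measure ℝ) (hμ : ternarySpec δ μ) :
    ∃ C : NNReal, ∀ (x : ℝ) (r : ℝ), 0 < r →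
      μ (Metric.ball x (2 * r)) ≤ C * μ (Metric.ball x r) :=
  ternary_measure_is_doubling_general δ hδ0 (by linarith) μ hμ
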